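/- arXiv:1701.01481 — 2 statements merged into one kernel-verified Lean document; each statement's English description precedes it below -/
import Mathlib

section
/- Let τ : ℝⁿ × [0,∞) → ℝ be bounded, compactly supported, and Lipschitz continuous with respect to the Euclidean distance, and let ψ : H → ℝ be smooth and compactly supported in H. Then u := τ*ψ is smooth on H and satisfies: there is a constant C₀ with |u(θ,ρ)| ≤ C₀ on H, and for every multi-index α with |α| ≥ 1 there is a constant C_α such that |∂^α u(θ,ρ)| ≤ C_α ρ^{1−|α|} for all (θ,ρ) ∈ H, where ∂^α denotes partial derivatives in the coordinates (θ¹,…,θⁿ,ρ). In particular all first partial derivatives of τ*ψ are uniformly bounded on H. -/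
open MeasureTheory

noncomputable section

/-- The open upper half-space `H = ℝⁿ × (0,∞)` inside `ℝⁿ × ℝ`. -/
def Hset (n : ℕ) : Set (EuclideanSpace ℝ (Fin n) × ℝ) := {p | 0 < p.2}

/-- Group multiplication on `H`: `(θ,ρ)·(θ',ρ') = (θ + ρθ', ρρ')`. -/
def hMul' {n : ℕ} (p q : EuclideanSpace ℝ (Fin n) × ℝ) : EuclideanSpace ℝ (Fin n) × ℝ :=
  (p.1 + p.2 • q.1, p.2 * q.2)

/-- Group inverse on `H`: `(θ,ρ)⁻¹ = (−θ/ρ, 1/ρ)`. -/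
def hInv' {n : ℕ} (p : EuclideanSpace ℝ (Fin n) × ℝ) : EuclideanSpace ℝ (Fin n) × ℝ :=
  (-(p.2⁻¹ • p.1), p.2⁻¹)

/-- The hyperbolic volume measure `dV(θ,ρ) = ρ^{−(n+1)} dθ dρ` on `H`. -/
def hypVol (n : ℕ) : Measure (EuclideanSpace ℝ (Fin n) × ℝ) :=
  (volume.restrict (Hset n)).withDensity fun p => ENNReal.ofReal ((p.2 ^ (n + 1))⁻¹)

/-- The group-theoretic convolution `(τ*ψ)(q) = ∫_H τ(p) ψ(p⁻¹·q) dV(p)`. -/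
def hConv {n : ℕ} (τ ψ : EuclideanSpace ℝ (Fin n) × ℝ → ℝ)
    (q : EuclideanSpace ℝ (Fin n) × ℝ) : ℝ :=
  ∫ p, τ p * ψ (hMul' (hInv' p) q) ∂(hypVol n)

/-!
For `q ∈ H` the left translation `p ↦ q · p` is a dilation by `ρ(q)` followed by a Euclidean
translation. Since `dV` is left invariant, `(τ * ψ)(q · x) = ∫ τ(q · p) ψ(p⁻¹ · x) dV(p)`.
Subtracting `τ(q)`, which only contributes a constant in `x`, leaves `ρ(q)` times the convolution
with `ψ` of the difference quotient `D p = (q ↦ (τ(q · p) - τ(q)) / ρ(q))`. The Lipschitz bound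
makes `D p` a bounded function of `q`, so `D` is a Lipschitz map into a Banach space of bounded
functions and `D * ψ` is smooth. Its derivatives at the identity therefore bound, uniformly in `q`,
those of `x ↦ (τ * ψ)(q · x)` by a multiple of `ρ(q)`, and undoing the dilation costs `ρ(q)⁻ᵐ` at
order `m`.
-/

open scoped BoundedContinuousFunction Topology

lemma norm_iteratedFDeriv_comp_add_smul {E F : Type*} [NormedAddCommGroup E] [NormedSpace ℝ E]
    [NormedAddCommGroup F] [NormedSpace ℝ F] (u : E → F) (m : ℕ) (a x : E) {r : ℝ} (hr : r ≠ 0) :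
    ‖iteratedFDeriv ℝ m (fun y => u (a + r • y)) x‖ =
      |r| ^ m * ‖iteratedFDeriv ℝ m u (a + r • x)‖ := by
  let g : E ≃L[ℝ] E := ContinuousLinearEquiv.smulLeft (Units.mk0 r hr)
  have hcomp := g.iteratedFDerivWithin_comp_right (fun y => u (a + y)) uniqueDiffOn_univ
    (Set.mem_univ (g x)) m
  rw [Set.preimage_univ, iteratedFDerivWithin_univ, iteratedFDerivWithin_univ,
    iteratedFDeriv_comp_add_left] at hcomp
  have hsmul : (iteratedFDeriv ℝ m u (a + r • x)).compContinuousLinearMap (fun _ => (g : E →L[ℝ] E))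
      = r ^ m • iteratedFDeriv ℝ m u (a + r • x) := by
    ext v
    exact (iteratedFDeriv ℝ m u (a + r • x)).map_smul_univ (fun _ => r) v |>.trans (by simp)
  change ‖iteratedFDeriv ℝ m ((fun y => u (a + y)) ∘ g) x‖ = _
  rw [hcomp]
  change ‖(iteratedFDeriv ℝ m u (a + r • x)).compContinuousLinearMap _‖ = _
  rw [hsmul, norm_smul, norm_pow, Real.norm_eq_abs]

lemma contDiffOn_integral_smul_of_isCompact {P G E : Type*} [NormedAddCommGroup P]
    [NormedSpace ℝ P] [NormedAddCommGroup G] [NormedSpace ℝ G] [MeasurableSpace G] [BorelSpace G]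
    [NormedAddCommGroup E] [NormedSpace ℝ E] {μ : Measure G} {s : Set P} {κ : Set G}
    {g : P → G → ℝ} {f : G → E} {k : ℕ∞} (hs : IsOpen s) (hκ : IsCompact κ)
    (hg₀ : ∀ y ∈ s, ∀ p ∉ κ, g y p = 0) (hf : IntegrableOn f κ μ)
    (hg : ContDiffOn ℝ k (fun z : P × G => g z.1 z.2) (s ×ˢ Set.univ)) :
    ContDiffOn ℝ k (fun y => ∫ p, g y p • f p ∂μ) s := by
  -- The integral is the value at `0` of a convolution whose second factor depends on `y`.
  have hconv := contDiffOn_convolution_right_with_param_comp (μ := μ)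
    (ContinuousLinearMap.lsmul ℝ ℝ : ℝ →L[ℝ] E →L[ℝ] E).flip
    (v := fun _ : P => (0 : G)) contDiffOn_const (f := κ.indicator f)
    (g := fun y p => g y (-p)) hs hκ.neg (fun y p hy hp => hg₀ y hy (-p) hp)
    (hf.integrable_indicator hκ.measurableSet).locallyIntegrable
    (hg.comp (f := fun z : P × G => (z.1, -z.2)) (by fun_prop) fun z hz => ⟨hz.1, trivial⟩)
  refine hconv.congr fun y hy => ?_
  refine integral_congr_ae (.of_forall fun p => ?_)
  by_cases hp : p ∈ κ
  · simp [hp]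
  · simp [hp, hg₀ y hy p hp]

section HalfSpaceGroup

variable {n : ℕ} {p q x : EuclideanSpace ℝ (Fin n) × ℝ}

lemma mem_Hset : p ∈ Hset n ↔ 0 < p.2 := Iff.rfl

lemma isOpen_Hset (n : ℕ) : IsOpen (Hset n) := isOpen_lt continuous_const continuous_snd

lemma one_mem_Hset (n : ℕ) : ((0, 1) : EuclideanSpace ℝ (Fin n) × ℝ) ∈ Hset n := one_pos (α := ℝ)

lemma hMul'_mem_Hset_iff (hq : q ∈ Hset n) : hMul' q p ∈ Hset n ↔ p ∈ Hset n := by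
  rw [mem_Hset] at hq
  simp only [mem_Hset, hMul', mul_pos_iff_of_pos_left hq]

lemma hInv'_mem_Hset_iff : hInv' p ∈ Hset n ↔ p ∈ Hset n := by
  simp only [mem_Hset, hInv', inv_pos]

lemma hInv'_hMul'_mem_Hset_iff (hx : x ∈ Hset n) : hMul' (hInv' p) x ∈ Hset n ↔ p ∈ Hset n := by
  rw [mem_Hset] at hx
  simp only [mem_Hset, hMul', hInv', mul_pos_iff_of_pos_right hx, inv_pos]

lemma hMul'_eq_add_smul (q p : EuclideanSpace ℝ (Fin n) × ℝ) :
    hMul' q p = (q.1, 0) + q.2 • p := by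
  simp [hMul', Prod.ext_iff]

lemma hMul'_one (q : EuclideanSpace ℝ (Fin n) × ℝ) : hMul' q (0, 1) = q := by
  simp [hMul']

lemma hInv'_hMul'_hMul'_hMul' (hq : q ∈ Hset n) (p x : EuclideanSpace ℝ (Fin n) × ℝ) :
    hMul' (hInv' (hMul' q p)) (hMul' q x) = hMul' (hInv' p) x := by
  have hq₀ : q.2 ≠ 0 := ne_of_gt hq
  ext1
  · simp only [hMul', hInv']
    match_scalars <;> field_simp; ring
  · simp only [hMul', hInv']
    field_simp

lemma hMul'_hInv'_hInv'_hMul' (hp : p ∈ Hset n) (hx : x ∈ Hset n) :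
    hMul' x (hInv' (hMul' (hInv' p) x)) = p := by
  have hp₀ : p.2 ≠ 0 := ne_of_gt hp
  have hx₀ : x.2 ≠ 0 := ne_of_gt hx
  ext1
  · simp only [hMul', hInv']
    match_scalars <;> field_simp; ring
  · simp only [hMul', hInv']
    field_simp

lemma dist_hMul'_left (hq : q ∈ Hset n) (x y : EuclideanSpace ℝ (Fin n) × ℝ) :
    dist (hMul' q x) (hMul' q y) = q.2 * dist x y := by
  rw [hMul'_eq_add_smul, hMul'_eq_add_smul, dist_add_left, dist_smul₀,
    Real.norm_of_nonneg (le_of_lt hq)]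

lemma contDiffAt_hInv' {k : WithTop ℕ∞} (hp : p ∈ Hset n) : ContDiffAt ℝ k hInv' p := by
  have hinv : ContDiffAt ℝ k (fun p : EuclideanSpace ℝ (Fin n) × ℝ => p.2⁻¹) p :=
    contDiffAt_snd.inv (ne_of_gt hp)
  exact (hinv.smul contDiffAt_fst).neg.prodMk hinv

lemma contDiff_hMul' {k : WithTop ℕ∞} :
    ContDiff ℝ k fun z : (EuclideanSpace ℝ (Fin n) × ℝ) × (EuclideanSpace ℝ (Fin n) × ℝ) =>
      hMul' z.1 z.2 := by
  unfold hMul'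
  fun_prop

lemma contDiffAt_hInv'_hMul' {k : WithTop ℕ∞}
    {z : (EuclideanSpace ℝ (Fin n) × ℝ) × (EuclideanSpace ℝ (Fin n) × ℝ)} (hz : z.2 ∈ Hset n) :
    ContDiffAt ℝ k (fun z => hMul' (hInv' z.2) z.1) z :=
  contDiff_hMul'.contDiffAt.comp z (((contDiffAt_hInv' hz).comp z contDiffAt_snd).prodMk
    contDiffAt_fst)

end HalfSpaceGroup

section HypVol

variable {n : ℕ} {E : Type*} [NormedAddCommGroup E]

lemma ae_mem_Hset (n : ℕ) : ∀ᵐ p ∂hypVol n, p ∈ Hset n :=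
  (withDensity_absolutelyContinuous _ _).ae_le (ae_restrict_mem (isOpen_Hset n).measurableSet)

lemma integral_hypVol [NormedSpace ℝ E] (f : EuclideanSpace ℝ (Fin n) × ℝ → E) :
    ∫ p, f p ∂hypVol n = ∫ p, (Hset n).indicator (fun p => (p.2 ^ (n + 1))⁻¹ • f p) p := by
  unfold hypVol
  rw [integral_withDensity_eq_integral_toReal_smul (by fun_prop) (by simp),
    integral_indicator (isOpen_Hset n).measurableSet]
  refine setIntegral_congr_fun (isOpen_Hset n).measurableSet fun p (hp : 0 < p.2) => ?_
  simp only [ENNReal.toReal_ofReal (inv_nonneg.2 (pow_nonneg hp.le (n + 1)))]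

lemma integral_hypVol_hMul'_left_eq_self [NormedSpace ℝ E] (f : EuclideanSpace ℝ (Fin n) × ℝ → E)
    {q : EuclideanSpace ℝ (Fin n) × ℝ} (hq : q ∈ Hset n) :
    ∫ p, f (hMul' q p) ∂hypVol n = ∫ p, f p ∂hypVol n := by
  have hq₀ : 0 < q.2 := hq
  set g := (Hset n).indicator fun p => (p.2 ^ (n + 1))⁻¹ • f p with hg
  have hdensity : (Hset n).indicator (fun p => (p.2 ^ (n + 1))⁻¹ • f (hMul' q p)) =
      fun p => q.2 ^ (n + 1) • g ((q.1, 0) + q.2 • p) := by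
    ext p
    rw [← hMul'_eq_add_smul]
    by_cases hp : p ∈ Hset n
    · rw [hg, Set.indicator_of_mem hp, Set.indicator_of_mem ((hMul'_mem_Hset_iff hq).2 hp),
        smul_smul]
      congr 1
      simp only [hMul', mul_pow]
      field_simp
    · rw [hg, Set.indicator_of_notMem hp,
        Set.indicator_of_notMem (mt (hMul'_mem_Hset_iff hq).1 hp), smul_zero]
  have : (volume : Measure (EuclideanSpace ℝ (Fin n) × ℝ)).IsAddHaarMeasure :=
    Measure.prod.instIsAddHaarMeasure volume volume
  have hdim : Module.finrank ℝ (EuclideanSpace ℝ (Fin n) × ℝ) = n + 1 := by simp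
  rw [integral_hypVol, integral_hypVol, ← hg, hdensity, integral_smul,
    Measure.integral_comp_smul volume (fun p => g ((q.1, 0) + p)) q.2,
    integral_add_left_eq_self g, hdim, abs_of_nonneg (by positivity), smul_smul,
    mul_inv_cancel₀ (by positivity), one_smul]

lemma hypVol_lt_top_of_isCompact {k : Set (EuclideanSpace ℝ (Fin n) × ℝ)} (hk : IsCompact k)
    (hkH : k ⊆ Hset n) : hypVol n k < ⊤ := by
  have hcont : ContinuousOn (fun p : EuclideanSpace ℝ (Fin n) × ℝ => (p.2 ^ (n + 1))⁻¹) k :=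
    ContinuousOn.inv₀ (by fun_prop) fun p hp => pow_ne_zero _ (ne_of_gt (hkH hp))
  rw [hypVol, withDensity_apply _ hk.measurableSet, Measure.restrict_restrict hk.measurableSet,
    Set.inter_eq_left.2 hkH]
  exact (hcont.integrableOn_compact hk).lintegral_lt_top

lemma locallyIntegrableOn_hypVol_of_continuousOn {f : EuclideanSpace ℝ (Fin n) × ℝ → E}
    (hf : ContinuousOn f (Hset n)) : LocallyIntegrableOn f (Hset n) (hypVol n) := by
  refine (locallyIntegrableOn_iff (isOpen_Hset n).isLocallyClosed).2 fun k hkH hk => ?_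
  have : IsFiniteMeasure ((hypVol n).restrict k) :=
    isFiniteMeasure_restrict.2 (hypVol_lt_top_of_isCompact hk hkH).ne
  have hint : IntegrableOn f k ((hypVol n).restrict k) :=
    (hf.mono hkH).integrableOn_compact hk
  rwa [IntegrableOn, Measure.restrict_restrict hk.measurableSet, Set.inter_self] at hint

end HypVol

section Convolution

variable {n : ℕ} {E : Type*} [NormedAddCommGroup E] [NormedSpace ℝ E]
  {f : EuclideanSpace ℝ (Fin n) × ℝ → E} {ψ : EuclideanSpace ℝ (Fin n) × ℝ → ℝ}
  {q x : EuclideanSpace ℝ (Fin n) × ℝ}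

/-- The convolution `f * ψ` over `H` of a vector-valued `f` with a scalar `ψ`; it extends `hConv` to
functions `f` with values in a Banach space. -/
def vectorHConv (f : EuclideanSpace ℝ (Fin n) × ℝ → E) (ψ : EuclideanSpace ℝ (Fin n) × ℝ → ℝ)
    (x : EuclideanSpace ℝ (Fin n) × ℝ) : E :=
  ∫ p, ψ (hMul' (hInv' p) x) • f p ∂hypVol n

lemma hConv_eq_vectorHConv (σ ψ : EuclideanSpace ℝ (Fin n) × ℝ → ℝ) :
    hConv σ ψ = vectorHConv σ ψ := by
  ext x
  simp only [hConv, vectorHConv, smul_eq_mul, mul_comm]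

lemma hConv_congr {σ τ : EuclideanSpace ℝ (Fin n) × ℝ → ℝ} (h : Set.EqOn σ τ (Hset n)) :
    hConv σ ψ = hConv τ ψ := by
  ext x
  refine integral_congr_ae ?_
  filter_upwards [ae_mem_Hset n] with p hp
  rw [h hp]

lemma hConv_hMul'_left (σ ψ : EuclideanSpace ℝ (Fin n) × ℝ → ℝ) (hq : q ∈ Hset n)
    (x : EuclideanSpace ℝ (Fin n) × ℝ) :
    hConv σ ψ (hMul' q x) = hConv (fun p => σ (hMul' q p)) ψ x := by
  unfold hConv
  rw [← integral_hypVol_hMul'_left_eq_self _ hq]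
  simp_rw [hInv'_hMul'_hMul'_hMul' hq]

lemma exists_isCompact_forall_notMem_eq_zero (hψc : HasCompactSupport ψ)
    (hψH : tsupport ψ ⊆ Hset n) {A : Set (EuclideanSpace ℝ (Fin n) × ℝ)} (hA : IsCompact A)
    (hAH : A ⊆ Hset n) :
    ∃ k, IsCompact k ∧ k ⊆ Hset n ∧ ∀ x ∈ A, ∀ p ∉ k, ψ (hMul' (hInv' p) x) = 0 := by
  -- `z = p⁻¹ x` is equivalent to `p = x z⁻¹`.
  refine ⟨(fun w : (EuclideanSpace ℝ (Fin n) × ℝ) × (EuclideanSpace ℝ (Fin n) × ℝ) =>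
    hMul' w.1 (hInv' w.2)) '' A ×ˢ tsupport ψ, ?_, ?_, fun x hx p hp => ?_⟩
  · refine (hA.prod hψc).image_of_continuousOn fun w hw => ?_
    have hinv : ContinuousAt hInv' w.2 :=
      (contDiffAt_hInv' (k := 0) (hψH hw.2)).continuousAt
    exact ((contDiff_hMul' (k := 0)).continuous.continuousAt.comp
      (continuousAt_fst.prodMk (hinv.comp continuousAt_snd))).continuousWithinAt
  · rintro _ ⟨w, hw, rfl⟩
    exact (hMul'_mem_Hset_iff (hAH hw.1)).2 (hInv'_mem_Hset_iff.2 (hψH hw.2))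
  · by_contra hne
    have hz : hMul' (hInv' p) x ∈ tsupport ψ := subset_tsupport ψ hne
    have hpH : p ∈ Hset n := (hInv'_hMul'_mem_Hset_iff (hAH hx)).1 (hψH hz)
    exact hp ⟨(x, hMul' (hInv' p) x), ⟨hx, hz⟩, hMul'_hInv'_hInv'_hMul' hpH (hAH hx)⟩

lemma contDiffOn_comp_hInv'_hMul' {k : WithTop ℕ∞} (hψ : ContDiff ℝ k ψ)
    (hψc : HasCompactSupport ψ) (hψH : tsupport ψ ⊆ Hset n) :
    ContDiffOn ℝ k (fun z : (EuclideanSpace ℝ (Fin n) × ℝ) × (EuclideanSpace ℝ (Fin n) × ℝ) =>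
      ψ (hMul' (hInv' z.2) z.1)) (Hset n ×ˢ Set.univ) := by
  rintro ⟨x, p⟩ ⟨hx, -⟩
  apply ContDiffAt.contDiffWithinAt
  by_cases hp : p ∈ Hset n
  · exact hψ.contDiffAt.comp (x, p) (contDiffAt_hInv'_hMul' hp)
  · obtain ⟨A, hA, hxA, hAH⟩ := exists_compact_subset (isOpen_Hset n) hx
    obtain ⟨k, hk, hkH, hzero⟩ := exists_isCompact_forall_notMem_eq_zero hψc hψH hA hAH
    refine (contDiffAt_const (c := (0 : ℝ))).congr_of_eventuallyEq ?_
    filter_upwards [prod_mem_nhds (mem_interior_iff_mem_nhds.1 hxA)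
      (hk.isClosed.isOpen_compl.mem_nhds (mt (@hkH p) hp))] with z hz
    exact hzero z.1 hz.1 z.2 hz.2

lemma integrable_comp_hInv'_hMul'_smul (hf : LocallyIntegrableOn f (Hset n) (hypVol n))
    (hψ : Continuous ψ) (hψc : HasCompactSupport ψ) (hψH : tsupport ψ ⊆ Hset n)
    (hx : x ∈ Hset n) : Integrable (fun p => ψ (hMul' (hInv' p) x) • f p) (hypVol n) := by
  obtain ⟨k, hk, hkH, hzero⟩ := exists_isCompact_forall_notMem_eq_zero hψc hψH
    isCompact_singleton (Set.singleton_subset_iff.2 hx)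
  have hsupp : Function.support (fun p => ψ (hMul' (hInv' p) x) • f p) ⊆ k := fun p hp => by
    by_contra hpk
    exact hp (by simp only [hzero x rfl p hpk, zero_smul])
  have hcont : ContinuousOn (fun p => ψ (hMul' (hInv' p) x)) k :=
    hψ.comp_continuousOn fun p hp => ((contDiffAt_hInv'_hMul' (k := 0)
      (z := (x, p)) (hkH hp)).continuousAt.comp (by fun_prop)).continuousWithinAt
  rw [← integrableOn_iff_integrable_of_support_subset hsupp]
  exact (hf.integrableOn_compact_subset hkH hk).continuousOn_smul hcont hk

lemma vectorHConv_clm_comp {F : Type*} [NormedAddCommGroup F] [NormedSpace ℝ F] [CompleteSpace E]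
    [CompleteSpace F] (L : E →L[ℝ] F) (hf : LocallyIntegrableOn f (Hset n) (hypVol n))
    (hψ : Continuous ψ) (hψc : HasCompactSupport ψ) (hψH : tsupport ψ ⊆ Hset n)
    (hx : x ∈ Hset n) : vectorHConv (fun p => L (f p)) ψ x = L (vectorHConv f ψ x) := by
  simp only [vectorHConv, ← map_smul]
  exact L.integral_comp_comm (integrable_comp_hInv'_hMul'_smul hf hψ hψc hψH hx)

lemma hConv_one_eq (hx : x ∈ Hset n) : hConv (fun _ => 1) ψ x = hConv (fun _ => 1) ψ (0, 1) := by
  simpa only [hMul'_one] using hConv_hMul'_left (fun _ => 1) ψ hx (0, 1)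

lemma hConv_const_add_mul {g : EuclideanSpace ℝ (Fin n) × ℝ → ℝ}
    (hg : LocallyIntegrableOn g (Hset n) (hypVol n)) (hψ : Continuous ψ)
    (hψc : HasCompactSupport ψ) (hψH : tsupport ψ ⊆ Hset n) (hx : x ∈ Hset n) (a b : ℝ) :
    hConv (fun p => a + b * g p) ψ x = a * hConv (fun _ => 1) ψ x + b * hConv g ψ x := by
  have hone := integrable_comp_hInv'_hMul'_smul
    (locallyIntegrableOn_hypVol_of_continuousOn (continuousOn_const (c := (1 : ℝ)))) hψ hψc hψH hx
  have hg' := integrable_comp_hInv'_hMul'_smul hg hψ hψc hψH hx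
  simp only [hConv_eq_vectorHConv, vectorHConv]
  rw [← integral_const_mul, ← integral_const_mul,
    ← integral_add (hone.const_mul a) (hg'.const_mul b)]
  refine integral_congr_ae (.of_forall fun p => ?_)
  simp only [smul_eq_mul]
  ring

theorem contDiffOn_vectorHConv {k : ℕ∞} (hf : LocallyIntegrableOn f (Hset n) (hypVol n))
    (hψ : ContDiff ℝ k ψ) (hψc : HasCompactSupport ψ) (hψH : tsupport ψ ⊆ Hset n) :
    ContDiffOn ℝ k (vectorHConv f ψ) (Hset n) := by
  intro x hx
  obtain ⟨A, hA, hxA, hAH⟩ := exists_compact_subset (isOpen_Hset n) hx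
  obtain ⟨κ, hκ, hκH, hzero⟩ := exists_isCompact_forall_notMem_eq_zero hψc hψH hA hAH
  have hsub : interior A ⊆ Hset n := interior_subset.trans hAH
  exact ((contDiffOn_integral_smul_of_isCompact isOpen_interior hκ
    (fun y hy => hzero y (interior_subset hy)) (hf.integrableOn_compact_subset hκH hκ)
    ((contDiffOn_comp_hInv'_hMul' hψ hψc hψH).mono (Set.prod_mono_left hsub))).contDiffAt
    (isOpen_interior.mem_nhds hxA)).contDiffWithinAt

lemma abs_hConv_le {σ : EuclideanSpace ℝ (Fin n) × ℝ → ℝ} {M : ℝ}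
    (hσ : ∀ p ∈ Hset n, |σ p| ≤ M) (hψ : Continuous ψ) (hψc : HasCompactSupport ψ)
    (hψH : tsupport ψ ⊆ Hset n) (hq : q ∈ Hset n) :
    |hConv σ ψ q| ≤ M * ∫ p, |ψ (hInv' p)| ∂hypVol n := by
  have hint : Integrable (fun p => ψ (hInv' p)) (hypVol n) := by
    simpa only [hMul'_one, smul_eq_mul, mul_one] using integrable_comp_hInv'_hMul'_smul
      (locallyIntegrableOn_hypVol_of_continuousOn (continuousOn_const (c := (1 : ℝ))))
      hψ hψc hψH (one_mem_Hset n)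
  rw [← hMul'_one q, hConv_hMul'_left σ ψ hq, ← integral_const_mul, ← Real.norm_eq_abs]
  refine norm_integral_le_of_norm_le (hint.abs.const_mul M) ?_
  filter_upwards [ae_mem_Hset n] with p hp
  rw [hMul'_one, norm_mul]
  exact mul_le_mul_of_nonneg_right (hσ _ ((hMul'_mem_Hset_iff hq).2 hp)) (norm_nonneg _)

end Convolution

section DifferenceQuotients

variable {n : ℕ} {σ ψ : EuclideanSpace ℝ (Fin n) × ℝ → ℝ} {K : NNReal}

/-- The rescaled difference quotients `q ↦ (σ(qp) − σ(q)) / ρ(q)` of a Lipschitz function `σ`, as a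
bounded function of `q ∈ H`. Bundling all `q` into one Banach space makes estimates for a
single function of `p` uniform in `q`. -/
def leftDiffQuotient (hσ : LipschitzWith K σ) (p : EuclideanSpace ℝ (Fin n) × ℝ) : Hset n →ᵇ ℝ :=
  .ofNormedAddCommGroup (fun q : Hset n => q.1.2⁻¹ * (σ (hMul' q p) - σ q))
    (by
      have hσc : Continuous σ := hσ.continuous
      unfold hMul'
      exact (Continuous.inv₀ (by fun_prop) fun q => ne_of_gt q.2).mul (by fun_prop))
    (K * dist p (0, 1))
    (fun q => by
      have hq : 0 < q.1.2 := q.2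
      have hdist := hσ.dist_le_mul (hMul' q p) (hMul' q (0, 1))
      rw [dist_hMul'_left q.2, hMul'_one, Real.dist_eq] at hdist
      rw [norm_mul, norm_inv, Real.norm_of_nonneg hq.le, inv_mul_le_iff₀ hq, Real.norm_eq_abs]
      linarith)

lemma leftDiffQuotient_apply (hσ : LipschitzWith K σ) (p : EuclideanSpace ℝ (Fin n) × ℝ)
    (q : Hset n) : leftDiffQuotient hσ p q = q.1.2⁻¹ * (σ (hMul' q p) - σ q) := rfl

lemma lipschitzWith_leftDiffQuotient (hσ : LipschitzWith K σ) :
    LipschitzWith K (leftDiffQuotient hσ) := by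
  refine LipschitzWith.of_dist_le_mul fun x y => ?_
  refine (BoundedContinuousFunction.dist_le (by positivity)).2 fun q => ?_
  have hq : 0 < q.1.2 := q.2
  have hdist := hσ.dist_le_mul (hMul' q x) (hMul' q y)
  rw [dist_hMul'_left q.2, Real.dist_eq] at hdist
  rw [leftDiffQuotient_apply, leftDiffQuotient_apply, Real.dist_eq, ← mul_sub, abs_mul, abs_inv,
    abs_of_pos hq, inv_mul_le_iff₀ hq, sub_sub_sub_cancel_right]
  linarith

lemma locallyIntegrableOn_leftDiffQuotient (hσ : LipschitzWith K σ) :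
    LocallyIntegrableOn (leftDiffQuotient hσ) (Hset n) (hypVol n) :=
  locallyIntegrableOn_hypVol_of_continuousOn
    (lipschitzWith_leftDiffQuotient hσ).continuous.continuousOn

lemma hConv_hMul'_eq_add_vectorHConv_leftDiffQuotient (hσ : LipschitzWith K σ)
    (hψ : Continuous ψ) (hψc : HasCompactSupport ψ) (hψH : tsupport ψ ⊆ Hset n) (q : Hset n)
    {x : EuclideanSpace ℝ (Fin n) × ℝ} (hx : x ∈ Hset n) :
    hConv σ ψ (hMul' q x) = σ q * hConv (fun _ => 1) ψ (0, 1) +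
      q.1.2 * vectorHConv (leftDiffQuotient hσ) ψ x q := by
  have hq : q.1.2 ≠ 0 := ne_of_gt q.2
  have hσ_eq : (fun p => σ (hMul' q p)) = fun p => σ q + q.1.2 * leftDiffQuotient hσ p q := by
    ext p
    rw [leftDiffQuotient_apply, mul_inv_cancel_left₀ hq, add_sub_cancel]
  have hquot : LocallyIntegrableOn (fun p => leftDiffQuotient hσ p q) (Hset n) (hypVol n) :=
    locallyIntegrableOn_hypVol_of_continuousOn
      ((BoundedContinuousFunction.evalCLM ℝ q).continuous.comp
        (lipschitzWith_leftDiffQuotient hσ).continuous).continuousOn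
  have heval : hConv (fun p => leftDiffQuotient hσ p q) ψ x =
      vectorHConv (leftDiffQuotient hσ) ψ x q := by
    rw [hConv_eq_vectorHConv]
    exact vectorHConv_clm_comp (BoundedContinuousFunction.evalCLM ℝ q)
      (locallyIntegrableOn_leftDiffQuotient hσ) hψ hψc hψH hx
  rw [hConv_hMul'_left σ ψ q.2, hσ_eq, hConv_const_add_mul hquot hψ hψc hψH hx, hConv_one_eq hx,
    heval]

lemma norm_iteratedFDeriv_hConv_hMul'_le {k : ℕ∞} (hσ : LipschitzWith K σ) (hψ : ContDiff ℝ k ψ)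
    (hψc : HasCompactSupport ψ) (hψH : tsupport ψ ⊆ Hset n) {m : ℕ} (hm : m ≠ 0) (hmk : m ≤ k)
    (q : Hset n) :
    ‖iteratedFDeriv ℝ m (fun x => hConv σ ψ (hMul' q x)) (0, 1)‖ ≤
      q.1.2 * ‖iteratedFDeriv ℝ m (vectorHConv (leftDiffQuotient hσ) ψ) (0, 1)‖ := by
  set W := vectorHConv (leftDiffQuotient hσ) ψ
  set L : (Hset n →ᵇ ℝ) →L[ℝ] ℝ := q.1.2 • BoundedContinuousFunction.evalCLM ℝ q
  have hq : 0 < q.1.2 := q.2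
  have hnhds : Hset n ∈ 𝓝 (0, 1) := (isOpen_Hset n).mem_nhds (one_mem_Hset n)
  have hW : ContDiffAt ℝ m W (0, 1) :=
    ((contDiffOn_vectorHConv (locallyIntegrableOn_leftDiffQuotient hσ) hψ hψc hψH).contDiffAt
      hnhds).of_le (mod_cast hmk)
  have hrep : (fun x => hConv σ ψ (hMul' q x)) =ᶠ[𝓝 (0, 1)]
      (fun _ => σ q * hConv (fun _ => 1) ψ (0, 1)) + L ∘ W := by
    filter_upwards [hnhds] with x hx
    exact hConv_hMul'_eq_add_vectorHConv_leftDiffQuotient hσ hψ.continuous hψc hψH q hx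
  have hL : ‖L‖ ≤ q.1.2 := by
    refine ContinuousLinearMap.opNorm_le_bound _ hq.le fun f => ?_
    rw [smul_apply, norm_smul, Real.norm_of_nonneg hq.le]
    exact mul_le_mul_of_nonneg_left (f.norm_coe_le_norm q) hq.le
  rw [(hrep.iteratedFDeriv ℝ m).eq_of_nhds,
    iteratedFDeriv_add_apply contDiffAt_const (L.contDiff.contDiffAt.comp _ hW),
    iteratedFDeriv_const_of_ne hm, Pi.zero_apply, zero_add]
  exact (L.norm_iteratedFDeriv_comp_left hW le_rfl).trans
    (mul_le_mul_of_nonneg_right hL (norm_nonneg _))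

theorem exists_norm_iteratedFDerivWithin_hConv_le {k : ℕ∞} (hσ : LipschitzWith K σ)
    (hψ : ContDiff ℝ k ψ) (hψc : HasCompactSupport ψ) (hψH : tsupport ψ ⊆ Hset n) {m : ℕ}
    (hm : m ≠ 0) (hmk : m ≤ k) :
    ∃ C : ℝ, ∀ q ∈ Hset n,
      ‖iteratedFDerivWithin ℝ m (hConv σ ψ) (Hset n) q‖ ≤ C * q.2 ^ ((1 : ℤ) - m) := by
  refine ⟨‖iteratedFDeriv ℝ m (vectorHConv (leftDiffQuotient hσ) ψ) (0, 1)‖, fun q hq => ?_⟩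
  have hq₀ : 0 < q.2 := hq
  have hscale : ‖iteratedFDeriv ℝ m (fun x => hConv σ ψ (hMul' q x)) (0, 1)‖ =
      q.2 ^ m * ‖iteratedFDeriv ℝ m (hConv σ ψ) q‖ := by
    simp_rw [hMul'_eq_add_smul q]
    rw [norm_iteratedFDeriv_comp_add_smul _ m _ _ hq₀.ne', ← hMul'_eq_add_smul, hMul'_one,
      abs_of_pos hq₀]
  have hbound := norm_iteratedFDeriv_hConv_hMul'_le hσ hψ hψc hψH hm hmk ⟨q, hq⟩
  rw [hscale] at hbound
  rw [iteratedFDerivWithin_of_isOpen m (isOpen_Hset n) hq, zpow_sub₀ hq₀.ne', zpow_one,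
    zpow_natCast, mul_div_assoc', le_div_iff₀ (by positivity)]
  linarith

end DifferenceQuotients

theorem stmt9_general {n : ℕ} {k : ℕ∞} {τ ψ : EuclideanSpace ℝ (Fin n) × ℝ → ℝ} {K : NNReal}
    (hτlip : LipschitzOnWith K τ (Hset n)) (hψ : ContDiff ℝ k ψ) (hψc : HasCompactSupport ψ)
    (hψH : tsupport ψ ⊆ Hset n) :
    ContDiffOn ℝ k (hConv τ ψ) (Hset n) ∧
    ((∃ M : ℝ, ∀ p ∈ Hset n, |τ p| ≤ M) → ∃ C₀ : ℝ, ∀ p ∈ Hset n, |hConv τ ψ p| ≤ C₀) ∧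
    (∀ m : ℕ, 1 ≤ m → m ≤ k → ∃ C : ℝ, ∀ p ∈ Hset n,
      ‖iteratedFDerivWithin ℝ m (hConv τ ψ) (Hset n) p‖ ≤ C * p.2 ^ ((1 : ℤ) - m)) := by
  refine ⟨?_, fun ⟨M, hM⟩ => ⟨_, fun p => abs_hConv_le hM hψ.continuous hψc hψH⟩,
    fun m hm hmk => ?_⟩
  · rw [hConv_eq_vectorHConv]
    exact contDiffOn_vectorHConv (locallyIntegrableOn_hypVol_of_continuousOn hτlip.continuousOn)
      hψ hψc hψH
  · obtain ⟨σ, hσ, hτσ⟩ := hτlip.extend_real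
    rw [hConv_congr hτσ]
    exact exists_norm_iteratedFDerivWithin_hConv_le hσ hψ hψc hψH (Nat.one_le_iff_ne_zero.1 hm) hmk

/-- If `τ` is bounded, compactly supported, and Lipschitz on `ℝⁿ × [0,∞)`, and `ψ` is smooth
and compactly supported in `H`, then `u := τ*ψ` is smooth on `H`, uniformly bounded on `H`,
and every derivative of order `m ≥ 1` satisfies `‖D^m u(θ,ρ)‖ ≤ C_m ρ^{1−m}` on `H`; in
particular all first partial derivatives of `τ*ψ` are uniformly bounded on `H`. -/
theorem stmt9 (n : ℕ) (hn : 1 ≤ n)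
    (τ : EuclideanSpace ℝ (Fin n) × ℝ → ℝ)
    (K : NNReal) (hτlip : LipschitzOnWith K τ {p | 0 ≤ p.2})
    (hτbdd : ∃ M : ℝ, ∀ p, |τ p| ≤ M) (hτsupp : HasCompactSupport τ)
    (ψ : EuclideanSpace ℝ (Fin n) × ℝ → ℝ)
    (hψ : ContDiff ℝ (⊤ : ℕ∞) ψ) (hψsupp : HasCompactSupport ψ) (hψH : tsupport ψ ⊆ Hset n) :
    ContDiffOn ℝ (⊤ : ℕ∞) (hConv τ ψ) (Hset n) ∧
    (∃ C₀ : ℝ, ∀ p ∈ Hset n, |hConv τ ψ p| ≤ C₀) ∧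
    (∀ m : ℕ, 1 ≤ m → ∃ C : ℝ, ∀ p ∈ Hset n,
      ‖iteratedFDerivWithin ℝ m (hConv τ ψ) (Hset n) p‖ ≤ C * p.2 ^ ((1 : ℤ) - m)) := by
  obtain ⟨hsmooth, hbdd, hderiv⟩ :=
    stmt9_general (hτlip.mono fun p (hp : 0 < p.2) => hp.le) hψ hψsupp hψH
  exact ⟨hsmooth, hbdd (hτbdd.imp fun _ hM p _ => hM p), fun m hm => hderiv m hm le_top⟩
end
end

section
/- Let n ≥ 3 and let f : ℝ → (0,∞) be a C³ function. On the open set {x ∈ ℝⁿ : x¹ > 0}, let k be the Riemannian metric with diagonal matrix k₁₁ = 1, k₂₂ = f(x¹)², k_{αα} = 1 for 3 ≤ α ≤ n, and k_{ij} = 0 for i ≠ j. Then the Cotton tensor of k satisfies C₂₂₁ = (1/(n−1)) ( f'(x¹) f''(x¹) − f(x¹) f'''(x¹) ) at every point with x¹ > 0; in particular the covariant derivatives of the Schouten tensor satisfy P₂₂,₁ = (1/(n−1))(f' f'' − f f''') and P₂₁,₂ = 0. -/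
noncomputable section

open scoped BigOperators

/-- Coordinate partial derivative `∂_i F` of a scalar function on `ℝᵐ`. -/
def pd {m : ℕ} (i : Fin m) (F : (Fin m → ℝ) → ℝ) (x : Fin m → ℝ) : ℝ :=
  fderiv ℝ F x (Pi.single i 1)

/-- Christoffel symbols `Γ^k_{ij} = ½ Σ_l g^{kl}(∂_i g_{jl} + ∂_j g_{il} − ∂_l g_{ij})`. -/
def christoffel {m : ℕ} (g : (Fin m → ℝ) → Matrix (Fin m) (Fin m) ℝ)
    (k i j : Fin m) (x : Fin m → ℝ) : ℝ :=
  (1 / 2) * ∑ l, (g x)⁻¹ k l *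
    (pd i (fun y => g y j l) x + pd j (fun y => g y i l) x - pd l (fun y => g y i j) x)

/-- Riemann curvature tensor
`R_{ijkl} = Σ_m g_{lm}(∂_i Γ^m_{jk} − ∂_j Γ^m_{ik} + Σ_p (Γ^m_{ip} Γ^p_{jk} − Γ^m_{jp} Γ^p_{ik}))`. -/
def riemann {m : ℕ} (g : (Fin m → ℝ) → Matrix (Fin m) (Fin m) ℝ)
    (i j k l : Fin m) (x : Fin m → ℝ) : ℝ :=
  ∑ mm, g x l mm *
    (pd i (christoffel g mm j k) x - pd j (christoffel g mm i k) x
      + ∑ p, (christoffel g mm i p x * christoffel g p j k x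
              - christoffel g mm j p x * christoffel g p i k x))

/-- Ricci tensor `Rc_{jk} = Σ_{i,l} g^{il} R_{ijkl}`. -/
def ricci {m : ℕ} (g : (Fin m → ℝ) → Matrix (Fin m) (Fin m) ℝ)
    (j k : Fin m) (x : Fin m → ℝ) : ℝ :=
  ∑ i, ∑ l, (g x)⁻¹ i l * riemann g i j k l x

/-- Scalar curvature `S = Σ_{j,k} g^{jk} Rc_{jk}`. -/
def scalarCurv {m : ℕ} (g : (Fin m → ℝ) → Matrix (Fin m) (Fin m) ℝ)
    (x : Fin m → ℝ) : ℝ :=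
  ∑ j, ∑ k, (g x)⁻¹ j k * ricci g j k x

/-- Schouten tensor `P_{ij} = (1/(m−2))(Rc_{ij} − (S/(2(m−1))) g_{ij})`. -/
def schouten {m : ℕ} (g : (Fin m → ℝ) → Matrix (Fin m) (Fin m) ℝ)
    (i j : Fin m) (x : Fin m → ℝ) : ℝ :=
  (1 / ((m : ℝ) - 2)) * (ricci g i j x - scalarCurv g x / (2 * ((m : ℝ) - 1)) * g x i j)

/-- Weyl tensor `W_{ijkl} = R_{ijkl} − (P ∧○ g)_{ijkl}`, where `∧○` is the Kulkarni–Nomizu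
product `(a ∧○ b)_{ijkl} = a_{il} b_{jk} + a_{jk} b_{il} − a_{ik} b_{jl} − a_{jl} b_{ik}`. -/
def weyl {m : ℕ} (g : (Fin m → ℝ) → Matrix (Fin m) (Fin m) ℝ)
    (i j k l : Fin m) (x : Fin m → ℝ) : ℝ :=
  riemann g i j k l x -
    (schouten g i l x * g x j k + schouten g j k x * g x i l
      - schouten g i k x * g x j l - schouten g j l x * g x i k)

/-- Covariant derivative of the Schouten tensor:
`P_{ij,k} = ∂_k P_{ij} − Σ_l Γ^l_{ki} P_{lj} − Σ_l Γ^l_{kj} P_{il}`. -/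
def schoutenCov {m : ℕ} (g : (Fin m → ℝ) → Matrix (Fin m) (Fin m) ℝ)
    (i j k : Fin m) (x : Fin m → ℝ) : ℝ :=
  pd k (fun y => schouten g i j y) x
    - ∑ l, christoffel g l k i x * schouten g l j x
    - ∑ l, christoffel g l k j x * schouten g i l x

/-- Cotton tensor `C_{ijk} = P_{ij,k} − P_{ik,j}`. -/
def cotton {m : ℕ} (g : (Fin m → ℝ) → Matrix (Fin m) (Fin m) ℝ)
    (i j k : Fin m) (x : Fin m → ℝ) : ℝ :=
  schoutenCov g i j k x - schoutenCov g i k j x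

/-!
The metric is the product of a warped surface `dt² + f(t)² dy²`, of Gauss curvature
`K = -f''/f`, and a flat factor. Hence `Rc = K g` on the surface directions, `S = 2K`, and so
`P = (K / (n - 1)) g` whenever the first index is a surface direction. As `∇g = 0` and `∇` preserves
the surface directions, the covariant derivative of `P` there is `dK ⊗ g / (n - 1)`; its
`(2,2,1)` component is `K' f² / (n - 1)` and its `(2,1,2)` component vanishes.
-/

open Filter Matrix Topology

section General

variable {m : ℕ} {g : (Fin m → ℝ) → Matrix (Fin m) (Fin m) ℝ} {x : Fin m → ℝ}

theorem pd_comp_eval (i a : Fin m) {φ : ℝ → ℝ} (hφ : DifferentiableAt ℝ φ (x a)) :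
    pd i (fun y => φ (y a)) x = if i = a then deriv φ (x a) else 0 := by
  have hcomp : HasFDerivAt (fun y : Fin m → ℝ => φ (y a)) _ x :=
    hφ.hasDerivAt.comp_hasFDerivAt x (hasFDerivAt_apply (𝕜 := ℝ) (F' := fun _ => ℝ) a x)
  simp [pd, hcomp.fderiv, Pi.single_apply, eq_comm]

theorem differentiableAt_comp_eval (a : Fin m) {φ : ℝ → ℝ} (hφ : DifferentiableAt ℝ φ (x a)) :
    DifferentiableAt ℝ (fun y : Fin m → ℝ => φ (y a)) x :=
  hφ.comp (f := fun y : Fin m → ℝ => y a) x (differentiableAt_apply a x)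

theorem pd_congr_of_eventuallyEq (i : Fin m) {F G : (Fin m → ℝ) → ℝ} (h : F =ᶠ[𝓝 x] G) :
    pd i F x = pd i G x := by
  rw [pd, pd, h.fderiv_eq]

theorem pd_mul (i : Fin m) {F G : (Fin m → ℝ) → ℝ} (hF : DifferentiableAt ℝ F x)
    (hG : DifferentiableAt ℝ G x) :
    pd i (fun y => F y * G y) x = pd i F x * G x + F x * pd i G x := by
  simp only [pd, fderiv_fun_mul hF hG, _root_.add_apply, _root_.smul_apply, smul_eq_mul]
  ring

theorem sum_metric_mul_christoffel (hg : IsUnit (g x).det) (l i j : Fin m) :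
    ∑ k, g x l k * christoffel g k i j x =
      1 / 2 * (pd i (fun y => g y j l) x + pd j (fun y => g y i l) x
        - pd l (fun y => g y i j) x) := by
  let v : Fin m → ℝ := fun l =>
    pd i (fun y => g y j l) x + pd j (fun y => g y i l) x - pd l (fun y => g y i j) x
  calc ∑ k, g x l k * christoffel g k i j x
      = (g x *ᵥ ((1 / 2 : ℝ) • ((g x)⁻¹ *ᵥ v))) l := rfl
    _ = 1 / 2 * v l := by
      rw [mulVec_smul, mulVec_mulVec, mul_nonsing_inv _ hg, one_mulVec, Pi.smul_apply, smul_eq_mul]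

theorem pd_metric_eq_sum_christoffel (hsymm : ∀ y, (g y).IsSymm) (hg : IsUnit (g x).det)
    (k i j : Fin m) :
    pd k (fun y => g y i j) x =
      ∑ l, christoffel g l k i x * g x l j + ∑ l, christoffel g l k j x * g x i l := by
  have hlower (p q : Fin m) : ∑ l, christoffel g l k p x * g x l q =
      ∑ l, g x q l * christoffel g l k p x :=
    Finset.sum_congr rfl fun l _ => by rw [mul_comm, (hsymm x).apply]
  have hji : (fun y => g y j i) = fun y => g y i j := funext fun y => (hsymm y).apply i j
  simp_rw [mul_comm _ (g x i _)]
  rw [hlower, sum_metric_mul_christoffel hg, sum_metric_mul_christoffel hg, hji]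
  ring

theorem ricci_eq_sum_christoffel (hg : IsUnit (g x).det) (j k : Fin m) :
    ricci g j k x = ∑ i, (pd i (christoffel g i j k) x - pd j (christoffel g i i k) x
      + ∑ p, (christoffel g i i p x * christoffel g p j k x
        - christoffel g i j p x * christoffel g p i k x)) := by
  refine Finset.sum_congr rfl fun i _ => ?_
  let v : Fin m → ℝ := fun l => pd i (christoffel g l j k) x - pd j (christoffel g l i k) x
    + ∑ p, (christoffel g l i p x * christoffel g p j k x
      - christoffel g l j p x * christoffel g p i k x)
  calc ∑ l, (g x)⁻¹ i l * riemann g i j k l x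
      = ((g x)⁻¹ *ᵥ (g x *ᵥ v)) i := rfl
    _ = v i := by rw [mulVec_mulVec, nonsing_inv_mul _ hg, one_mulVec]

end General

section Diagonal

variable {m : ℕ} {g : (Fin m → ℝ) → Matrix (Fin m) (Fin m) ℝ} {x : Fin m → ℝ} {d : Fin m → ℝ}

theorem inv_diagonal_of_ne_zero (hd : ∀ i, d i ≠ 0) : (diagonal d)⁻¹ = diagonal d⁻¹ := by
  refine inv_eq_right_inv ?_
  rw [diagonal_mul_diagonal', ← diagonal_one]
  exact congrArg diagonal (funext fun i => mul_inv_cancel₀ (hd i))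

theorem christoffel_of_eq_diagonal (hg : g x = diagonal d) (hd : ∀ i, d i ≠ 0) (k i j : Fin m) :
    christoffel g k i j x = 1 / 2 * ((d k)⁻¹ *
      (pd i (fun y => g y j k) x + pd j (fun y => g y i k) x - pd k (fun y => g y i j) x)) := by
  simp [christoffel, hg, inv_diagonal_of_ne_zero hd, diagonal_apply]

theorem scalarCurv_of_eq_diagonal (hg : g x = diagonal d) (hd : ∀ i, d i ≠ 0) :
    scalarCurv g x = ∑ i, (d i)⁻¹ * ricci g i i x := by
  simp [scalarCurv, hg, inv_diagonal_of_ne_zero hd, diagonal_apply]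

end Diagonal

/-- The metric `(dxᵃ)² + f(xᵃ)² (dxᵇ)² + ∑_{i ≠ a, b} (dxⁱ)²`, the product of a warped surface
with a flat space; it is degenerate where `f` vanishes. -/
def warpedMetric {m : ℕ} (a b : Fin m) (f : ℝ → ℝ) (x : Fin m → ℝ) : Matrix (Fin m) (Fin m) ℝ :=
  diagonal fun i => if i = b then f (x a) ^ 2 else 1

/-- The Christoffel symbol `Γᵏ_{ij}` of `warpedMetric a b f` where `xᵃ = t`. The upper index is
the first one, as in `christoffel`. -/
def warpedChristoffel {m : ℕ} (a b : Fin m) (f : ℝ → ℝ) (k i j : Fin m) (t : ℝ) : ℝ :=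
  if k = a ∧ i = b ∧ j = b then -(f t * deriv f t)
  else if k = b ∧ (i = a ∧ j = b ∨ i = b ∧ j = a) then deriv f t / f t
  else 0

/-- The Gauss curvature `-f'' / f` of the warped surface `dt² + f(t)² dy²`. -/
def warpedCurvature (f : ℝ → ℝ) (t : ℝ) : ℝ :=
  -(deriv (deriv f) t / f t)

section Warped

variable {m : ℕ} {a b : Fin m} {f : ℝ → ℝ} {x : Fin m → ℝ}

theorem warpedMetric_isSymm (y : Fin m → ℝ) : (warpedMetric a b f y).IsSymm :=
  isSymm_diagonal _

theorem warpedMetric_diag_ne_zero (hx : f (x a) ≠ 0) (i : Fin m) :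
    (if i = b then f (x a) ^ 2 else 1) ≠ 0 := by
  split_ifs
  exacts [pow_ne_zero 2 hx, one_ne_zero]

theorem isUnit_det_warpedMetric (hx : f (x a) ≠ 0) : IsUnit (warpedMetric a b f x).det := by
  rw [warpedMetric, det_diagonal, isUnit_iff_ne_zero]
  exact Finset.prod_ne_zero_iff.2 fun i _ => warpedMetric_diag_ne_zero hx i

theorem hasDerivAt_warpedMetric_entry (i j : Fin m) {t : ℝ} (hf : DifferentiableAt ℝ f t) :
    HasDerivAt (fun s => (diagonal fun i => if i = b then f s ^ 2 else 1) i j)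
      (if i = b ∧ j = b then 2 * f t * deriv f t else 0) t := by
  rcases eq_or_ne i j with rfl | hij
  · by_cases hi : i = b
    · simpa [hi] using hf.hasDerivAt.fun_pow 2
    · simpa [hi] using hasDerivAt_const t (1 : ℝ)
  · have : ¬ (i = b ∧ j = b) := fun h => hij (h.1.trans h.2.symm)
    simpa [hij, this] using hasDerivAt_const t (0 : ℝ)

theorem pd_warpedMetric (hf : DifferentiableAt ℝ f (x a)) (k i j : Fin m) :
    pd k (fun y => warpedMetric a b f y i j) x =
      if k = a ∧ i = b ∧ j = b then 2 * f (x a) * deriv f (x a) else 0 := by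
  have hentry := hasDerivAt_warpedMetric_entry (b := b) i j hf
  rw [ite_and, ← hentry.deriv]
  exact pd_comp_eval k a hentry.differentiableAt

theorem christoffel_warpedMetric (hab : a ≠ b) (hf : DifferentiableAt ℝ f (x a))
    (hx : f (x a) ≠ 0) (k i j : Fin m) :
    christoffel (warpedMetric a b f) k i j x = warpedChristoffel a b f k i j (x a) := by
  rw [christoffel_of_eq_diagonal (g := warpedMetric a b f) rfl (warpedMetric_diag_ne_zero hx)]
  simp only [pd_warpedMetric hf, warpedChristoffel]
  rcases eq_or_ne k a with rfl | hka
  · grind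
  rcases eq_or_ne k b with rfl | hkb
  · grind
  · simp [hka, hkb]

theorem hasDerivAt_warpedChristoffel {t : ℝ} (hf : ContDiffAt ℝ 2 f t) (ht : f t ≠ 0)
    (k i j : Fin m) :
    HasDerivAt (warpedChristoffel a b f k i j)
      (if k = a ∧ i = b ∧ j = b then -(deriv f t * deriv f t + f t * deriv (deriv f) t)
      else if k = b ∧ (i = a ∧ j = b ∨ i = b ∧ j = a) then
        (deriv (deriv f) t * f t - deriv f t * deriv f t) / f t ^ 2
      else 0) t := by
  have h₀ : HasDerivAt f (deriv f t) t := (hf.differentiableAt two_ne_zero).hasDerivAt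
  have h₁ : HasDerivAt (deriv f) (deriv (deriv f) t) t :=
    ((hf.derivWithin (m := 1) le_rfl).differentiableAt one_ne_zero).hasDerivAt
  unfold warpedChristoffel
  split_ifs
  exacts [(h₀.mul h₁).neg, h₁.div h₀ ht, hasDerivAt_const t 0]

theorem eventually_contDiffAt_and_ne_zero {n : ℕ} (hf : ContDiffAt ℝ n f (x a))
    (hx : f (x a) ≠ 0) : ∀ᶠ y in 𝓝 x, ContDiffAt ℝ n f (y a) ∧ f (y a) ≠ 0 :=
  (continuous_apply a).continuousAt.eventually <|
    (hf.eventually (by simp)).and (hf.continuousAt.eventually_ne hx)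

theorem pd_christoffel_warpedMetric (hab : a ≠ b) (hf : ContDiffAt ℝ 2 f (x a))
    (hx : f (x a) ≠ 0) (l k i j : Fin m) :
    pd l (christoffel (warpedMetric a b f) k i j) x =
      if l = a then deriv (warpedChristoffel a b f k i j) (x a) else 0 := by
  have heq : christoffel (warpedMetric a b f) k i j =ᶠ[𝓝 x]
      fun y => warpedChristoffel a b f k i j (y a) := by
    filter_upwards [eventually_contDiffAt_and_ne_zero (n := 2) hf hx] with y ⟨hfy, hy⟩
    exact christoffel_warpedMetric hab (hfy.differentiableAt two_ne_zero) hy k i j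
  rw [pd_congr_of_eventuallyEq l heq,
    pd_comp_eval l a (hasDerivAt_warpedChristoffel hf hx k i j).differentiableAt]

theorem warpedChristoffel_of_ne {k : Fin m} (hk : k ≠ a ∧ k ≠ b) (i j : Fin m) (t : ℝ) :
    warpedChristoffel a b f k i j t = 0 := by
  simp [warpedChristoffel, hk]

theorem sum_warpedChristoffel_self (hab : a ≠ b) (p : Fin m) (t : ℝ) :
    ∑ i, warpedChristoffel a b f i i p t = if p = a then deriv f t / f t else 0 := by
  rw [Finset.sum_eq_single b]
  · simp [warpedChristoffel, hab.symm]
  · intro i _ hi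
    simp [warpedChristoffel, hi]
  · simp

theorem sum_sum_warpedChristoffel_mul (hab : a ≠ b) {t : ℝ} (ht : f t ≠ 0) (j k : Fin m) :
    ∑ i, ∑ p, warpedChristoffel a b f i j p t * warpedChristoffel a b f p i k t =
      if j = a ∧ k = a then (deriv f t / f t) ^ 2
      else if j = b ∧ k = b then -2 * deriv f t ^ 2
      else 0 := by
  rw [Fintype.sum_eq_add a b hab fun i hi =>
    Finset.sum_eq_zero fun p _ => by rw [warpedChristoffel_of_ne hi, zero_mul]]
  simp only [Fintype.sum_eq_add a b hab fun _ hp =>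
    mul_eq_zero_of_right _ (warpedChristoffel_of_ne hp _ _ _)]
  grind [warpedChristoffel]

theorem sum_pd_christoffel_warpedMetric (hab : a ≠ b) (hf : ContDiffAt ℝ 2 f (x a))
    (hx : f (x a) ≠ 0) (j k : Fin m) :
    ∑ i, pd i (christoffel (warpedMetric a b f) i j k) x =
      if j = b ∧ k = b then -(deriv f (x a) ^ 2 + f (x a) * deriv (deriv f) (x a)) else 0 := by
  simp only [pd_christoffel_warpedMetric hab hf hx, Finset.sum_ite_eq', Finset.mem_univ, if_true,
    (hasDerivAt_warpedChristoffel hf hx _ _ _).deriv]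
  simp [hab, sq]

theorem sum_pd_christoffel_warpedMetric_self (hab : a ≠ b) (hf : ContDiffAt ℝ 2 f (x a))
    (hx : f (x a) ≠ 0) (j k : Fin m) :
    ∑ i, pd j (christoffel (warpedMetric a b f) i i k) x =
      if j = a ∧ k = a then
        deriv (deriv f) (x a) / f (x a) - (deriv f (x a) / f (x a)) ^ 2
      else 0 := by
  simp only [pd_christoffel_warpedMetric hab hf hx,
    (hasDerivAt_warpedChristoffel hf hx _ _ _).deriv]
  rw [Finset.sum_eq_single b]
  · grind
  · intro i _ hi
    simp [hi]
  · simp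

theorem ricci_warpedMetric (hab : a ≠ b) (hf : ContDiffAt ℝ 2 f (x a)) (hx : f (x a) ≠ 0)
    (j k : Fin m) :
    ricci (warpedMetric a b f) j k x =
      if j = a ∨ j = b then warpedCurvature f (x a) * warpedMetric a b f x j k else 0 := by
  have htrace : ∑ i, ∑ p, warpedChristoffel a b f i i p (x a) *
      warpedChristoffel a b f p j k (x a) =
        if j = b ∧ k = b then -deriv f (x a) ^ 2 else 0 := by
    rw [Finset.sum_comm]
    simp only [← Finset.sum_mul, sum_warpedChristoffel_self hab, ite_mul, zero_mul,
      Finset.sum_ite_eq', Finset.mem_univ, if_true]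
    simp only [warpedChristoffel, hab, true_and, false_and, if_false, mul_ite, mul_zero]
    congr 1
    field_simp
  rw [ricci_eq_sum_christoffel (isUnit_det_warpedMetric hx)]
  simp only [Finset.sum_add_distrib, Finset.sum_sub_distrib,
    sum_pd_christoffel_warpedMetric hab hf hx, sum_pd_christoffel_warpedMetric_self hab hf hx,
    christoffel_warpedMetric hab (hf.differentiableAt two_ne_zero) hx, htrace,
    sum_sum_warpedChristoffel_mul hab hx]
  simp only [warpedMetric, diagonal_apply, warpedCurvature]
  rcases eq_or_ne j a with rfl | hja
  · grind
  rcases eq_or_ne j b with rfl | hjb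
  · grind
  · simp [hja, hjb]

theorem scalarCurv_warpedMetric (hab : a ≠ b) (hf : ContDiffAt ℝ 2 f (x a)) (hx : f (x a) ≠ 0) :
    scalarCurv (warpedMetric a b f) x = 2 * warpedCurvature f (x a) := by
  rw [scalarCurv_of_eq_diagonal (g := warpedMetric a b f) rfl (warpedMetric_diag_ne_zero hx)]
  simp only [ricci_warpedMetric hab hf hx]
  rw [Fintype.sum_eq_add a b hab fun i hi => by simp [hi]]
  simp only [warpedMetric, diagonal_apply_eq, hab, if_false, if_true, true_or, or_true, inv_one,
    one_mul, mul_one]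
  field_simp
  ring

theorem schouten_warpedMetric (hm : 3 ≤ m) (hab : a ≠ b) (hf : ContDiffAt ℝ 2 f (x a))
    (hx : f (x a) ≠ 0) {i : Fin m} (hi : i = a ∨ i = b) (j : Fin m) :
    schouten (warpedMetric a b f) i j x =
      warpedCurvature f (x a) / ((m : ℝ) - 1) * warpedMetric a b f x i j := by
  have hm' : (3 : ℝ) ≤ m := by exact_mod_cast hm
  have h₁ : (m : ℝ) - 1 ≠ 0 := by linarith
  have h₂ : (m : ℝ) - 2 ≠ 0 := by linarith
  rw [schouten, ricci_warpedMetric hab hf hx, scalarCurv_warpedMetric hab hf hx, if_pos hi]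
  field_simp
  ring

theorem hasDerivAt_warpedCurvature {t : ℝ} (hf : ContDiffAt ℝ 3 f t) (ht : f t ≠ 0) :
    HasDerivAt (warpedCurvature f)
      ((deriv f t * deriv (deriv f) t - f t * deriv (deriv (deriv f)) t) / f t ^ 2) t := by
  have h₀ : HasDerivAt f (deriv f t) t := (hf.differentiableAt three_ne_zero).hasDerivAt
  have hf' : ContDiffAt ℝ 2 (deriv f) t := hf.derivWithin (by norm_num)
  have h₂ : HasDerivAt (deriv (deriv f)) (deriv (deriv (deriv f)) t) t :=
    ((hf'.derivWithin (m := 1) le_rfl).differentiableAt one_ne_zero).hasDerivAt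
  convert! (h₂.div h₀ ht).neg using 1
  ring

theorem pd_schouten_warpedMetric (hm : 3 ≤ m) (hab : a ≠ b) (hf : ContDiffAt ℝ 3 f (x a))
    (hx : f (x a) ≠ 0) {i : Fin m} (hi : i = a ∨ i = b) (j k : Fin m) :
    pd k (fun y => schouten (warpedMetric a b f) i j y) x =
      (if k = a then deriv (warpedCurvature f) (x a) / ((m : ℝ) - 1) else 0)
          * warpedMetric a b f x i j
        + warpedCurvature f (x a) / ((m : ℝ) - 1) * pd k (fun y => warpedMetric a b f y i j) x := by
  have hP : (fun y => schouten (warpedMetric a b f) i j y) =ᶠ[𝓝 x]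
      fun y => warpedCurvature f (y a) / ((m : ℝ) - 1) * warpedMetric a b f y i j := by
    filter_upwards [eventually_contDiffAt_and_ne_zero (n := 3) hf hx] with y ⟨hfy, hy⟩
    exact schouten_warpedMetric hm hab (hfy.of_le (by norm_num)) hy hi j
  have hK : DifferentiableAt ℝ (fun t => warpedCurvature f t / ((m : ℝ) - 1)) (x a) :=
    (hasDerivAt_warpedCurvature hf hx).differentiableAt.div_const _
  have hg : DifferentiableAt ℝ (fun y => warpedMetric a b f y i j) x :=
    differentiableAt_comp_eval a
      (hasDerivAt_warpedMetric_entry i j (hf.differentiableAt three_ne_zero)).differentiableAt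
  rw [pd_congr_of_eventuallyEq k hP, pd_mul k (differentiableAt_comp_eval a hK) hg,
    pd_comp_eval k a hK, deriv_div_const]

theorem schoutenCov_warpedMetric (hm : 3 ≤ m) (hab : a ≠ b) (hf : ContDiffAt ℝ 3 f (x a))
    (hx : f (x a) ≠ 0) {i : Fin m} (hi : i = a ∨ i = b) (j k : Fin m) :
    schoutenCov (warpedMetric a b f) i j k x =
      (if k = a then deriv (warpedCurvature f) (x a) / ((m : ℝ) - 1) else 0)
        * warpedMetric a b f x i j := by
  have hf₁ : DifferentiableAt ℝ f (x a) := hf.differentiableAt three_ne_zero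
  have hf₂ : ContDiffAt ℝ 2 f (x a) := hf.of_le (by norm_num)
  have hleft : ∑ l, christoffel (warpedMetric a b f) l k i x * schouten (warpedMetric a b f) l j x =
      warpedCurvature f (x a) / ((m : ℝ) - 1) *
        ∑ l, christoffel (warpedMetric a b f) l k i x * warpedMetric a b f x l j := by
    rw [Finset.mul_sum]
    refine Finset.sum_congr rfl fun l _ => ?_
    by_cases hl : l = a ∨ l = b
    · rw [schouten_warpedMetric hm hab hf₂ hx hl, mul_left_comm]
    · rw [christoffel_warpedMetric hab hf₁ hx, warpedChristoffel_of_ne (not_or.1 hl), zero_mul,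
        zero_mul, mul_zero]
  have hright : ∑ l, christoffel (warpedMetric a b f) l k j x *
        schouten (warpedMetric a b f) i l x =
      warpedCurvature f (x a) / ((m : ℝ) - 1) *
        ∑ l, christoffel (warpedMetric a b f) l k j x * warpedMetric a b f x i l := by
    simp only [schouten_warpedMetric hm hab hf₂ hx hi, Finset.mul_sum, mul_left_comm]
  rw [schoutenCov, pd_schouten_warpedMetric hm hab hf hx hi, hleft, hright,
    pd_metric_eq_sum_christoffel warpedMetric_isSymm (isUnit_det_warpedMetric hx)]
  ring

end Warped

theorem stmt16_general {n : ℕ} (hn : 3 ≤ n) {a b : Fin n} (hab : a ≠ b) {f : ℝ → ℝ}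
    {x : Fin n → ℝ} (hf : ContDiffAt ℝ 3 f (x a)) (hx : f (x a) ≠ 0) :
    schoutenCov (warpedMetric a b f) b b a x
        = (1 / ((n : ℝ) - 1)) * (deriv f (x a) * deriv (deriv f) (x a)
            - f (x a) * deriv (deriv (deriv f)) (x a)) ∧
      schoutenCov (warpedMetric a b f) b a b x = 0 ∧
      cotton (warpedMetric a b f) b b a x
        = (1 / ((n : ℝ) - 1)) * (deriv f (x a) * deriv (deriv f) (x a)
            - f (x a) * deriv (deriv (deriv f)) (x a)) := by
  have hbba : schoutenCov (warpedMetric a b f) b b a x = (1 / ((n : ℝ) - 1)) *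
      (deriv f (x a) * deriv (deriv f) (x a) - f (x a) * deriv (deriv (deriv f)) (x a)) := by
    rw [schoutenCov_warpedMetric hn hab hf hx (.inr rfl), if_pos rfl,
      (hasDerivAt_warpedCurvature hf hx).deriv, warpedMetric, diagonal_apply_eq, if_pos rfl]
    field_simp
  have hbab : schoutenCov (warpedMetric a b f) b a b x = 0 := by
    rw [schoutenCov_warpedMetric hn hab hf hx (.inr rfl), if_neg hab.symm, zero_mul]
  exact ⟨hbba, hbab, by rw [cotton, hbba, hbab, sub_zero]⟩

/-- Let `n ≥ 3` and `f : ℝ → (0,∞)` of class `C³`. For the metric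
`k = (dx¹)² + f(x¹)²(dx²)² + (dx³)² + ⋯ + (dxⁿ)²` on `{x ∈ ℝⁿ : x¹ > 0}`, the covariant
derivatives of the Schouten tensor satisfy `P₂₂,₁ = (1/(n−1))(f' f'' − f f''')` and
`P₂₁,₂ = 0`, hence the Cotton tensor satisfies `C₂₂₁ = (1/(n−1))(f' f'' − f f''')`. -/
theorem stmt16 (n : ℕ) (hn : 3 ≤ n) (f : ℝ → ℝ) (hfpos : ∀ t, 0 < f t) (hf : ContDiff ℝ 3 f)
    (k : (Fin n → ℝ) → Matrix (Fin n) (Fin n) ℝ)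
    (hk : ∀ x, k x = Matrix.diagonal (fun i =>
      if i = (⟨1, by omega⟩ : Fin n) then f (x ⟨0, by omega⟩) ^ 2 else 1)) :
    ∀ x : Fin n → ℝ, 0 < x ⟨0, by omega⟩ →
      schoutenCov k ⟨1, by omega⟩ ⟨1, by omega⟩ ⟨0, by omega⟩ x
        = (1 / ((n : ℝ) - 1)) * (deriv f (x ⟨0, by omega⟩) * deriv (deriv f) (x ⟨0, by omega⟩)
            - f (x ⟨0, by omega⟩) * deriv (deriv (deriv f)) (x ⟨0, by omega⟩)) ∧
      schoutenCov k ⟨1, by omega⟩ ⟨0, by omega⟩ ⟨1, by omega⟩ x = 0 ∧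
      cotton k ⟨1, by omega⟩ ⟨1, by omega⟩ ⟨0, by omega⟩ x
        = (1 / ((n : ℝ) - 1)) * (deriv f (x ⟨0, by omega⟩) * deriv (deriv f) (x ⟨0, by omega⟩)
            - f (x ⟨0, by omega⟩) * deriv (deriv (deriv f)) (x ⟨0, by omega⟩)) := by
  obtain rfl : k = warpedMetric ⟨0, by omega⟩ ⟨1, by omega⟩ f := funext hk
  exact fun x _ => stmt16_general hn (by simp) hf.contDiffAt (hfpos _).ne'
end
end
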